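/- arXiv:1905.09770 — 5 statements merged into one kernel-verified Lean document; each statement's English description precedes it below -/
import Mathlib

section
/- Let P be a pregroup and let v ∈ X* be a cyclically P-reduced word. If v ≈ w, then w is cyclically P-reduced. -/
/-!
The pairs of consecutive letters of `w` can be treated uniformly by reading `v` and the
interleaving elements `s` cyclically (indices modulo the length), which is consistent because
`s 0 = s n = 1`. The statement then becomes local: writing `x₀, x₁, x₂, x₃` for four consecutive
letters and `a, b, c` for the elements inserted between them, no pair `(xᵢ, xᵢ₊₁)` being in `D`
forces `([a⁻¹ x₁ b], [b⁻¹ x₂ c]) ∉ D` (`Pregroup.not_D_interleave`).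

Moving a factor across a gap, `(x, y) ↦ (x s, s⁻¹ y)`, does not change whether the pair lies in
`D` (axiom (P4), `Pregroup.not_D_mul_mul`). By (P5) it does not make either letter composable with
its other neighbour (`Pregroup.not_D_mul_left`, `Pregroup.not_D_mul_right`). Moving `b` first
gives `X = x₁ b` and `Y = b⁻¹ x₂`. If `(a⁻¹ X, Y c) ∈ D`, then (P5) applied to
`a, a⁻¹ X, Y c, c⁻¹` yields `(X, Y c) ∈ D` or `(a⁻¹ X, Y) ∈ D`, and both are excluded
by the previous remark.
-/

/-- A pregroup in the sense of Stallings: a set `P` with a distinguished element `one`,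
a partial multiplication, defined for pairs in `D` and modelled here as a total
function `mul` whose values are only meaningful on pairs in `D`, and an involution
`inv` (written `x ↦ x^σ` in the literature), satisfying Stallings' axioms (P1)–(P5). -/
structure Pregroup (P : Type*) where
  one : P
  D : P → P → Prop
  mul : P → P → P
  inv : P → P
  /-- `σ` is an involution. -/
  inv_inv : ∀ x, inv (inv x) = x
  /-- (P1) -/
  D_one_left : ∀ x, D one x
  D_one_right : ∀ x, D x one
  one_mul : ∀ x, mul one x = x
  mul_one : ∀ x, mul x one = x
  /-- (P2) -/
  D_mul_inv : ∀ x, D x (inv x)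
  D_inv_mul : ∀ x, D (inv x) x
  mul_inv : ∀ x, mul x (inv x) = one
  inv_mul : ∀ x, mul (inv x) x = one
  /-- (P3) -/
  D_inv : ∀ x y, D x y → D (inv y) (inv x)
  inv_mul_eq : ∀ x y, D x y → inv (mul x y) = mul (inv y) (inv x)
  /-- (P4) -/
  D_assoc : ∀ x y z, D x y → D y z → (D (mul x y) z ↔ D x (mul y z))
  mul_assoc : ∀ x y z, D x y → D y z → D (mul x y) z → mul (mul x y) z = mul x (mul y z)
  /-- (P5) -/
  five : ∀ x y z t, D x y → D y z → D z t → D (mul x y) z ∨ D (mul y z) t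

namespace Pregroup

variable {P : Type*}

/-- The `i`-th letter (0-based) of the word `w` over `P`. -/
def letter (pg : Pregroup P) (w : List P) (i : ℕ) : P :=
  w.getD i pg.one

/-- `w` is a word over `X = P \ {1}`. -/
def InX (pg : Pregroup P) (w : List P) : Prop :=
  ∀ p ∈ w, p ≠ pg.one

/-- `w` is `P`-reduced: no pair of consecutive letters lies in `D(P)`. -/
def PReduced (pg : Pregroup P) (w : List P) : Prop :=
  ∀ i, i + 1 < w.length → ¬ pg.D (pg.letter w i) (pg.letter w (i + 1))

/-- `w` is cyclically `P`-reduced. -/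
def CycPReduced (pg : Pregroup P) (w : List P) : Prop :=
  pg.PReduced w ∧ (1 < w.length → ¬ pg.D (pg.letter w (w.length - 1)) (pg.letter w 0))

end Pregroup

namespace Pregroup

variable {P : Type*}

/-- `w` is an interleave of `v` (Stallings' relation `v ≈ w`): the words have the
same length `n` and there are `s 0 = 1, s 1, …, s (n-1), s n = 1` in `P` with
`(s i^σ, v i), (v i, s (i+1)), ([s i ^σ * v i], s (i+1)) ∈ D(P)` and
`w i = [s i ^σ * v i * s (i+1)]` for all `i < n`. -/
def Interleave (pg : Pregroup P) (v w : List P) : Prop :=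
  w.length = v.length ∧
  ∃ s : ℕ → P, s 0 = pg.one ∧ s v.length = pg.one ∧
    ∀ i < v.length,
      pg.D (pg.inv (s i)) (pg.letter v i) ∧
      pg.D (pg.letter v i) (s (i + 1)) ∧
      pg.D (pg.mul (pg.inv (s i)) (pg.letter v i)) (s (i + 1)) ∧
      pg.letter w i = pg.mul (pg.mul (pg.inv (s i)) (pg.letter v i)) (s (i + 1))

end Pregroup

namespace Pregroup

variable {P : Type*} (pg : Pregroup P)

lemma D_mul_cancel_right {x s : P} (h : pg.D x s) : pg.D (pg.mul x s) (pg.inv s) := by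
  rw [pg.D_assoc x s _ h (pg.D_mul_inv s), pg.mul_inv]
  exact pg.D_one_right x

lemma mul_cancel_right {x s : P} (h : pg.D x s) : pg.mul (pg.mul x s) (pg.inv s) = x := by
  rw [pg.mul_assoc x s _ h (pg.D_mul_inv s) (pg.D_mul_cancel_right h), pg.mul_inv, pg.mul_one]

lemma D_mul_cancel_left {s y : P} (h : pg.D (pg.inv s) y) :
    pg.D s (pg.mul (pg.inv s) y) := by
  rw [← pg.D_assoc s _ y (pg.D_mul_inv s) h, pg.mul_inv]
  exact pg.D_one_left y

lemma mul_cancel_left {s y : P} (h : pg.D (pg.inv s) y) :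
    pg.mul s (pg.mul (pg.inv s) y) = y := by
  rw [← pg.mul_assoc s _ y (pg.D_mul_inv s) h, pg.mul_inv, pg.one_mul]
  rw [pg.mul_inv]
  exact pg.D_one_left y

lemma not_D_mul_mul {x s y : P} (h₁ : pg.D x s) (h₂ : pg.D (pg.inv s) y)
    (hxy : ¬ pg.D x y) : ¬ pg.D (pg.mul x s) (pg.mul (pg.inv s) y) := by
  rwa [← pg.D_assoc _ _ _ (pg.D_mul_cancel_right h₁) h₂, pg.mul_cancel_right h₁]

/-- If `(x, y) ∉ D`, moving `s⁻¹` onto `y` does not make `y` composable with its right neighbour `z`. -/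
lemma not_D_mul_left {x s y z : P} (h₁ : pg.D x s) (h₂ : pg.D (pg.inv s) y)
    (hxy : ¬ pg.D x y) (hyz : ¬ pg.D y z) : ¬ pg.D (pg.mul (pg.inv s) y) z := by
  intro h
  rcases pg.five _ _ _ _ h₁ (pg.D_mul_cancel_left h₂) h with hk | hk
  · exact pg.not_D_mul_mul h₁ h₂ hxy hk
  · rw [pg.mul_cancel_left h₂] at hk
    exact hyz hk

/-- If `(x, y) ∉ D`, moving `s` onto `x` does not make `x` composable with its left neighbour `z`. -/
lemma not_D_mul_right {z x s y : P} (h₁ : pg.D x s) (h₂ : pg.D (pg.inv s) y)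
    (hxy : ¬ pg.D x y) (hzx : ¬ pg.D z x) : ¬ pg.D z (pg.mul x s) := by
  intro h
  rcases pg.five _ _ _ _ h (pg.D_mul_cancel_right h₁) h₂ with hk | hk
  · rw [pg.D_assoc _ _ _ h (pg.D_mul_cancel_right h₁), pg.mul_cancel_right h₁] at hk
    exact hzx hk
  · rw [pg.mul_cancel_right h₁] at hk
    exact hxy hk

/-- The local form of the theorem: interleaving keeps the two middle letters of a `P`-reduced
word `x₀ x₁ x₂ x₃` non-composable. -/
lemma not_D_interleave {x₀ x₁ x₂ x₃ a b c : P}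
    (h01 : ¬ pg.D x₀ x₁) (h12 : ¬ pg.D x₁ x₂) (h23 : ¬ pg.D x₂ x₃)
    (h0a : pg.D x₀ a) (ha1 : pg.D (pg.inv a) x₁) (h1b : pg.D x₁ b)
    (hb2 : pg.D (pg.inv b) x₂) (hc3 : pg.D (pg.inv c) x₃)
    (hab : pg.D (pg.mul (pg.inv a) x₁) b) (hbc : pg.D (pg.mul (pg.inv b) x₂) c) :
    ¬ pg.D (pg.mul (pg.mul (pg.inv a) x₁) b) (pg.mul (pg.mul (pg.inv b) x₂) c) := by
  rw [pg.mul_assoc _ _ _ ha1 h1b hab]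
  rw [pg.D_assoc _ _ _ ha1 h1b] at hab
  have hXY := pg.not_D_mul_mul h1b hb2 h12
  have h0X := pg.not_D_mul_right h1b hb2 h12 h01
  have hY3 := pg.not_D_mul_left h1b hb2 h12 h23
  intro h
  rcases pg.five _ _ _ _ (pg.D_mul_cancel_left hab) h (pg.D_mul_cancel_right hbc) with hk | hk
  · rw [pg.mul_cancel_left hab] at hk
    exact pg.not_D_mul_right hbc hc3 hY3 hXY hk
  · rw [pg.D_assoc _ _ _ h (pg.D_mul_cancel_right hbc), pg.mul_cancel_right hbc] at hk
    exact pg.not_D_mul_left h0a hab h0X hXY hk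

end Pregroup

/-- If `v ∈ X*` is cyclically `P`-reduced and `v ≈ w`
(`w ∈ X*` is an interleave of `v`), then `w` is cyclically `P`-reduced. -/
theorem Pregroup.cycPReduced_of_interleave {P : Type*} (pg : Pregroup P)
    (v w : List P) (hvX : pg.InX v) (hwX : pg.InX w)
    (hv : pg.CycPReduced v) (hvw : pg.Interleave v w) :
    pg.CycPReduced w := by
  obtain ⟨hlen, s, hs0, hsn, hs⟩ := hvw
  obtain ⟨hred, hcyc⟩ := hv
  unfold CycPReduced PReduced
  rw [hlen]
  set n := v.length with hn
  rcases Nat.lt_or_ge 1 n with hn1 | hn1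
  swap
  · exact ⟨fun i hi => by omega, fun h => by omega⟩
  have hsucc : ∀ i, (i + 1) % n = i % n + 1 ∨ (i % n + 1 = n ∧ (i + 1) % n = 0) := by
    intro i
    have hlt := Nat.mod_lt i (by omega : 0 < n)
    rw [Nat.add_mod, Nat.mod_eq_of_lt hn1]
    rcases Nat.lt_or_ge (i % n + 1) n with h | h
    · exact Or.inl (Nat.mod_eq_of_lt h)
    · have hk : i % n + 1 = n := by omega
      exact Or.inr ⟨hk, by rw [hk, Nat.mod_self]⟩
  have hsmod : ∀ i, s (i % n + 1) = s ((i + 1) % n) := by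
    intro i
    rcases hsucc i with h | ⟨h, hk⟩
    · rw [h]
    · rw [h, hk, hs0, hsn]
  have hx : ∀ i, ¬ pg.D (pg.letter v (i % n)) (pg.letter v ((i + 1) % n)) := by
    intro i
    rcases hsucc i with h | ⟨h, hk⟩
    · have hlt := Nat.mod_lt (i + 1) (by omega : 0 < n)
      rw [h]
      exact hred _ (by omega)
    · rw [hk, show i % n = n - 1 by omega]
      exact hcyc hn1
  have hd := fun i => hs (i % n) (Nat.mod_lt i (by omega))
  simp only [hsmod] at hd
  have key : ∀ i, ¬ pg.D (pg.letter w ((i + 1) % n)) (pg.letter w ((i + 2) % n)) := by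
    intro i
    rw [(hd (i + 1)).2.2.2, (hd (i + 2)).2.2.2]
    exact pg.not_D_interleave (hx i) (hx (i + 1)) (hx (i + 2)) (hd i).2.1 (hd (i + 1)).1
      (hd (i + 1)).2.1 (hd (i + 2)).1 (hd (i + 3)).1 (hd (i + 1)).2.2.1
      (hd (i + 2)).2.2.1
  refine ⟨fun i hi => ?_, fun _ => ?_⟩
  -- `key` starts at position `1`, so position `i` is reached as `(i + n - 1) + 1` modulo `n`.
  · have := key (i + n - 1)
    rwa [show i + n - 1 + 1 = i + n by omega, show i + n - 1 + 2 = i + 1 + n by omega,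
      Nat.add_mod_right, Nat.add_mod_right, Nat.mod_eq_of_lt hi,
      Nat.mod_eq_of_lt (by omega)] at this
  · have := key (n - 2)
    rwa [show n - 2 + 1 = n - 1 by omega, show n - 2 + 2 = n by omega, Nat.mod_self,
      Nat.mod_eq_of_lt (by omega)] at this
end

section
/- Let P be a pregroup, let v = x_1⋯x_n ∈ X* be cyclically P-reduced with n > 1, and suppose w ∈ I(v). Then w can be obtained from v by applying a sequence of at most n single rewrites. -/
namespace Pregroup

variable {P : Type*}

/-- `w` is a cyclic interleave of `v` (the relation `v ≈ᶜ w`): either both words have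
length at most 1 and are equal, or they have the same length `n > 1` and there exist
`s 0, s 1, …, s (n-1), s n = s 0` in `P` such that
`(s i^σ, v i), (v i, s (i+1)), ([s i ^σ * v i], s (i+1)) ∈ D(P)` and
`w i = [s i ^σ * v i * s (i+1)]` for all `i < n`. -/
def CycInterleave (pg : Pregroup P) (v w : List P) : Prop :=
  w.length = v.length ∧
  ((v.length ≤ 1 ∧ w = v) ∨
    (1 < v.length ∧
      ∃ s : ℕ → P, s v.length = s 0 ∧
        ∀ i < v.length,
          pg.D (pg.inv (s i)) (pg.letter v i) ∧
          pg.D (pg.letter v i) (s (i + 1)) ∧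
          pg.D (pg.mul (pg.inv (s i)) (pg.letter v i)) (s (i + 1)) ∧
          pg.letter w i = pg.mul (pg.mul (pg.inv (s i)) (pg.letter v i)) (s (i + 1))))

end Pregroup

namespace Pregroup

variable {P : Type*}

/-- A single rewrite: a cyclic interleave in which the interleaving element is
nontrivial at exactly one position; equivalently, one cyclically consecutive pair of
letters `(v j, v (j+1))` (indices mod the length) is replaced by
`([v j * s], [s^σ * v (j+1)])` for some `s ∈ P`, all indicated products being
defined in `P`, and all other letters are unchanged. -/
def SingleRewrite (pg : Pregroup P) (v w : List P) : Prop :=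
  w.length = v.length ∧ 1 < v.length ∧
  ∃ j < v.length, ∃ s : P, s ≠ pg.one ∧
    pg.D (pg.letter v j) s ∧
    pg.D (pg.inv s) (pg.letter v ((j + 1) % v.length)) ∧
    pg.letter w j = pg.mul (pg.letter v j) s ∧
    pg.letter w ((j + 1) % v.length) =
      pg.mul (pg.inv s) (pg.letter v ((j + 1) % v.length)) ∧
    ∀ i < v.length, i ≠ j → i ≠ (j + 1) % v.length → pg.letter w i = pg.letter v i

end Pregroup

namespace Pregroup

variable {P : Type*} (pg : Pregroup P)

theorem inv_one : pg.inv pg.one = pg.one := by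
  have h := pg.mul_inv pg.one
  rwa [pg.one_mul] at h

theorem D_assoc_left {a x b : P} (h₁ : pg.D a x) (h₂ : pg.D x b) (h₃ : pg.D (pg.mul a x) b) :
    pg.D a (pg.mul x b) ∧ pg.mul a (pg.mul x b) = pg.mul (pg.mul a x) b :=
  ⟨(pg.D_assoc _ _ _ h₁ h₂).1 h₃, (pg.mul_assoc _ _ _ h₁ h₂ h₃).symm⟩

/-- The left interleaving element at letter `i` once `s 1, …, s m` have been applied; the letter `0`
receives its left factor `s 0 = s n` only at the last step. -/
def leftElt (n : ℕ) (s : ℕ → P) (m i : ℕ) : P :=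
  if i = 0 then (if n ≤ m then s 0 else pg.one) else if i ≤ m then s i else pg.one

/-- The right interleaving element at letter `i` once `s 1, …, s m` have been applied. -/
def rightElt (s : ℕ → P) (m i : ℕ) : P :=
  if i < m then s (i + 1) else pg.one

/-- The word obtained from `v` once `s 1, …, s m` have been applied. -/
def stage (v : List P) (s : ℕ → P) (m : ℕ) : List P :=
  (List.range v.length).map fun i =>
    pg.mul (pg.mul (pg.inv (pg.leftElt v.length s m i)) (pg.letter v i)) (pg.rightElt s m i)

theorem length_stage (v : List P) (s : ℕ → P) (m : ℕ) : (pg.stage v s m).length = v.length := by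
  simp [stage]

theorem letter_stage (v : List P) (s : ℕ → P) (m : ℕ) {i : ℕ} (hi : i < v.length) :
    pg.letter (pg.stage v s m) i =
      pg.mul (pg.mul (pg.inv (pg.leftElt v.length s m i)) (pg.letter v i))
        (pg.rightElt s m i) := by
  simp [stage, letter, hi]

theorem ext_letter {v w : List P} (hl : v.length = w.length)
    (h : ∀ i < v.length, pg.letter v i = pg.letter w i) : v = w := by
  refine List.ext_getElem hl fun i h₁ h₂ => ?_
  have := h i h₁
  simpa [letter, h₁, h₂] using this

/-- Steps that do not change the current term can be removed from a chain. -/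
theorem exists_chain {α : Type*} (R : α → α → Prop) (c : ℕ → α) (n : ℕ)
    (h : ∀ m < n, c m = c (m + 1) ∨ R (c m) (c (m + 1))) :
    ∃ k ≤ n, ∃ d : ℕ → α, d 0 = c 0 ∧ d k = c n ∧ ∀ m < k, R (d m) (d (m + 1)) := by
  induction n with
  | zero => exact ⟨0, le_rfl, c, rfl, rfl, by simp⟩
  | succ n ih =>
    obtain ⟨k, hk, d, hd0, hdk, hd⟩ := ih fun m hm => h m (by omega)
    rcases h n (by omega) with he | hR
    · exact ⟨k, by omega, d, hd0, hdk.trans he, hd⟩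
    · refine ⟨k + 1, by omega, fun i => if i ≤ k then d i else c (n + 1), by simpa using hd0,
        by simp, fun m hm => ?_⟩
      rcases Nat.lt_or_ge m k with hlt | hge
      · simpa [hlt.le, Nat.succ_le_of_lt hlt] using hd m hlt
      · obtain rfl : m = k := by omega
        simpa [hdk] using hR

/-- Applying the next entry `s (m + 1)` is a single rewrite at the letters `m` and `m + 1` (mod `n`),
or it does nothing. -/
theorem stage_step (v : List P) (s : ℕ → P) (hn : 1 < v.length) (hs0 : s v.length = s 0)
    (hs : ∀ i < v.length, pg.D (pg.inv (s i)) (pg.letter v i) ∧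
      pg.D (pg.letter v i) (s (i + 1)) ∧
      pg.D (pg.mul (pg.inv (s i)) (pg.letter v i)) (s (i + 1)))
    (m : ℕ) (hm : m < v.length) :
    pg.stage v s m = pg.stage v s (m + 1) ∨
      pg.SingleRewrite (pg.stage v s m) (pg.stage v s (m + 1)) := by
  have hright : ∀ i, i ≠ m → pg.rightElt s (m + 1) i = pg.rightElt s m i := by
    intro i hi
    have : i < m + 1 ↔ i < m := by omega
    simp [rightElt, this]
  have hmod : (m + 1) % v.length = if m + 1 = v.length then 0 else m + 1 := by
    split_ifs with h
    · simp [h]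
    · exact Nat.mod_eq_of_lt (by omega)
  have hleft : ∀ i < v.length, i ≠ (m + 1) % v.length →
      pg.leftElt v.length s (m + 1) i = pg.leftElt v.length s m i := by
    clear hs
    intro i hlt hi
    rw [hmod] at hi
    unfold leftElt
    grind
  have hr₀ : pg.rightElt s m m = pg.one := by simp [rightElt]
  have hr₁ : pg.rightElt s (m + 1) m = s (m + 1) := by simp [rightElt]
  have hl₀ : pg.leftElt v.length s m ((m + 1) % v.length) = pg.one := by
    clear hs; rw [hmod]; unfold leftElt; grind
  have hl₁ : pg.leftElt v.length s (m + 1) ((m + 1) % v.length) = s (m + 1) := by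
    clear hs; rw [hmod]; unfold leftElt; grind
  by_cases h1 : s (m + 1) = pg.one
  · left
    refine pg.ext_letter (by simp [length_stage]) fun i hi => ?_
    rw [length_stage] at hi
    have hr : pg.rightElt s (m + 1) i = pg.rightElt s m i := by
      by_cases h : i = m
      · subst h; rw [hr₀, hr₁, h1]
      · exact hright i h
    have hl : pg.leftElt v.length s (m + 1) i = pg.leftElt v.length s m i := by
      by_cases h : i = (m + 1) % v.length
      · rw [h, hl₀, hl₁, h1]
      · exact hleft i hi h
    rw [letter_stage _ _ _ _ hi, letter_stage _ _ _ _ hi, hr, hl]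
  · right
    have hlt : (m + 1) % v.length < v.length := Nat.mod_lt _ (by omega)
    have hne : m ≠ (m + 1) % v.length := by rw [hmod]; split_ifs <;> omega
    -- The left factor of letter `m` is already `s m`, except that it is still trivial when `m = 0`.
    have hlm : pg.leftElt v.length s m m = s m ∨ pg.leftElt v.length s m m = pg.one := by
      clear hs; unfold leftElt; grind
    -- The right factor of letter `m + 1` is still trivial, except when this is the letter `0`.
    have hrm : pg.rightElt s m ((m + 1) % v.length) = s ((m + 1) % v.length + 1) ∨
        pg.rightElt s m ((m + 1) % v.length) = pg.one := by
      unfold rightElt; split_ifs <;> simp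
    have hsm : s ((m + 1) % v.length) = s (m + 1) := by
      rw [hmod]; split_ifs with h
      · rw [h, hs0]
      · rfl
    obtain ⟨-, ha2, ha3⟩ := hs m hm
    obtain ⟨hb1, hb2, hb3⟩ := hs _ hlt
    rw [hsm] at hb1 hb3
    refine ⟨by simp [length_stage], by simpa [length_stage] using hn, m,
      by simpa [length_stage] using hm, s (m + 1), h1, ?_⟩
    rw [length_stage, letter_stage _ _ _ _ hm, letter_stage _ _ _ _ hm,
      letter_stage _ _ _ _ hlt, letter_stage _ _ _ _ hlt, hr₀, hr₁, hl₀, hl₁,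
      hleft m hm hne, hright _ hne.symm]
    simp only [pg.mul_one, inv_one, pg.one_mul]
    refine ⟨?_, ?_, trivial, ?_, ?_⟩
    · rcases hlm with h | h <;> rw [h]
      · exact ha3
      · rw [inv_one, pg.one_mul]; exact ha2
    · rcases hrm with h | h <;> rw [h]
      · exact (pg.D_assoc_left hb1 hb2 hb3).1
      · rw [pg.mul_one]; exact hb1
    · rcases hrm with h | h <;> rw [h]
      · exact (pg.D_assoc_left hb1 hb2 hb3).2.symm
      · rw [pg.mul_one, pg.mul_one]
    · intro i hi h₁ h₂
      rw [letter_stage _ _ _ _ hi, letter_stage _ _ _ _ hi, hright i h₁, hleft i hi h₂]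

end Pregroup

/-- Let `v ∈ X*` be cyclically `P`-reduced with `|v| = n > 1` and
let `w ∈ I(v)` (that is, `v ≈ᶜ w`).  Then `w` can be obtained from `v` by applying
a sequence of at most `n` single rewrites. -/
theorem Pregroup.cycInterleave_of_singleRewrites {P : Type*} (pg : Pregroup P)
    (v w : List P) (hn : 1 < v.length) (hvX : pg.InX v) (hwX : pg.InX w)
    (hv : pg.CycPReduced v) (hvw : pg.CycInterleave v w) :
    ∃ k ≤ v.length, ∃ c : ℕ → List P, c 0 = v ∧ c k = w ∧
      ∀ m < k, pg.SingleRewrite (c m) (c (m + 1)) := by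
  obtain ⟨hlen, ⟨hle, -⟩ | ⟨-, s, hs0, hs⟩⟩ := hvw
  · omega
  have hstart : pg.stage v s 0 = v := by
    refine pg.ext_letter (pg.length_stage _ _ _) fun i hi => ?_
    rw [length_stage] at hi
    have hl : pg.leftElt v.length s 0 i = pg.one := by
      unfold leftElt; grind
    have hr : pg.rightElt s 0 i = pg.one := by simp [rightElt]
    rw [letter_stage _ _ _ _ hi, hl, hr, inv_one, pg.one_mul, pg.mul_one]
  have hend : pg.stage v s v.length = w := by
    refine pg.ext_letter (by rw [length_stage, hlen]) fun i hi => ?_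
    rw [length_stage] at hi
    have hl : pg.leftElt v.length s v.length i = s i := by
      unfold leftElt; grind
    have hr : pg.rightElt s v.length i = s (i + 1) := by simp [rightElt, hi]
    rw [letter_stage _ _ _ _ hi, hl, hr, (hs i hi).2.2.2]
  obtain ⟨k, hk, c, hc0, hck, hc⟩ := exists_chain pg.SingleRewrite (pg.stage v s) v.length
    (pg.stage_step v s hn hs0 fun i hi => ⟨(hs i hi).1, (hs i hi).2.1, (hs i hi).2.2.1⟩)
  exact ⟨k, hk, c, hc0.trans hstart, hck.trans hend, hc⟩
end

section
/- Let ⟨Y | S⟩ be a finite presentation of a group G in which every relator has length at most r, where r ≥ 2, and suppose that for some constant λ the Dehn function of the presentation satisfies D(n) ≤ λn for all n ≥ 0. Then every word w over Y ∪ Y^{-1} with w =_G 1 has a subword of length at most 384λr(r−1) + 64 that is not geodesic. -/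
/-!
The proof replaces van Kampen diagrams by integration of a combinatorial 1-form on the Cayley
graph of `G`. An antisymmetric function `ω` on pairs of vertices can be summed along words; the
sum is invariant under free reduction, so on a product of `N` conjugates of relators it is at
most `N` times its largest value on a single relator loop (`abs_pathSum_le_of_areaLE`).

Suppose all subwords of `w` of length at most `K = 384λr(r-1) + 64` are geodesic. Then `w` is
longer than `K`. Let `T` be slightly larger than `6λr(r-1)`, and among the subwords of `w` of
length `> K` whose endpoints are at distance at most `3T + 1` choose a shortest one, of length
`L`, with vertices `u 0, …, u L`. By minimality, two of the vertices `u 0, …, u (L-1)` at distance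
at most `3T + 1` are at distance equal to their difference of indices. Hence on the
`T`-neighbourhood of this path there is a 3-Lipschitz coordinate `g` with `g (u a) = a`. With
`f = max (T - d(·, u)) 0`, the form `ω = f dg` sums to `T` on each edge of the path, is at most
`3T` on every edge, and is at most `3r(r-1)` on relator loops, since `f` varies by at most `r - 1`
on such a loop (`exists_calibration`). Closing up the path by a chord of length at most `3T + 1`
gives a loop of area at most `λ(L + 3T + 1)`, whence
`T(L - 1) - 3T - 3T(3T + 1) ≤ 3r(r-1)λ(L + 3T + 1)`. As `T ≥ 6λr(r-1)`, this forces
`L ≤ 21T + 15 < K`, a contradiction.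
-/

/-- A word over `Y ∪ Y⁻¹` (a letter `(y, b)` denotes `y` if `b = true` and `y⁻¹`
otherwise) is reduced if it contains no adjacent cancelling pair. -/
def IsReducedWord {Y : Type*} (l : List (Y × Bool)) : Prop :=
  l.Chain' fun a b => ¬(b.1 = a.1 ∧ b.2 = !a.2)

/-- A word is cyclically reduced if it is reduced and, in addition, its last letter
does not cancel with its first letter. -/
def IsCyclicallyReducedWord {Y : Type*} (l : List (Y × Bool)) : Prop :=
  IsReducedWord l ∧ ∀ a ∈ l.getLast?, ∀ b ∈ l.head?, ¬(b.1 = a.1 ∧ b.2 = !a.2)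

/-- `AreaLE S g N` holds if `g` can be written in the free group as a product of `N`
conjugates of elements of `S ∪ S⁻¹`. -/
def AreaLE {Y : Type*} (S : Set (FreeGroup Y)) (g : FreeGroup Y) (N : ℕ) : Prop :=
  ∃ c r : Fin N → FreeGroup Y,
    (∀ i, r i ∈ S ∨ (r i)⁻¹ ∈ S) ∧
    g = (List.ofFn fun i => c i * r i * (c i)⁻¹).prod

/-- A word `s` is geodesic (with respect to the presentation with relator set `S`)
if no strictly shorter word represents the same element of the quotient group,
i.e. every word representing the same element modulo the normal closure of `S` is
at least as long. -/
def IsGeodesicWord {Y : Type*} (S : Set (FreeGroup Y)) (s : List (Y × Bool)) : Prop :=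
  ∀ s' : List (Y × Bool),
    (FreeGroup.mk s')⁻¹ * FreeGroup.mk s ∈ Subgroup.normalClosure S →
      s.length ≤ s'.length

/-! ### Sums of 1-forms along words -/

section PathSum

variable {Y G : Type*} [Group G]

/-- The sum of `ω` over the consecutive edges of the path in the Cayley graph of `G` that starts
at the given vertex and is labelled by the given word. -/
def pathSum (π : FreeGroup Y →* G) (ω : G → G → ℤ) : G → List (Y × Bool) → ℤ
  | _, [] => 0
  | h, x :: l => ω h (h * π (FreeGroup.mk [x])) + pathSum π ω (h * π (FreeGroup.mk [x])) l

theorem mk_cons_eq (x : Y × Bool) (l : List (Y × Bool)) :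
    FreeGroup.mk (x :: l) = FreeGroup.mk [x] * FreeGroup.mk l := by
  rw [FreeGroup.mul_mk]; rfl

variable (π : FreeGroup Y →* G) (ω : G → G → ℤ)

theorem pathSum_append (h : G) (l m : List (Y × Bool)) :
    pathSum π ω h (l ++ m) = pathSum π ω h l + pathSum π ω (h * π (FreeGroup.mk l)) m := by
  induction l generalizing h with
  | nil => simp [pathSum, ← FreeGroup.one_eq_mk]
  | cons x l ih =>
    rw [List.cons_append, pathSum, pathSum, ih, mk_cons_eq x l, map_mul, mul_assoc, add_assoc]

theorem pathSum_eq_sum (h : G) (l : List (Y × Bool)) :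
    pathSum π ω h l = ∑ i ∈ Finset.range l.length,
      ω (h * π (FreeGroup.mk (l.take i))) (h * π (FreeGroup.mk (l.take (i + 1)))) := by
  induction l generalizing h with
  | nil => simp [pathSum]
  | cons x l ih =>
    rw [pathSum, ih, List.length_cons, Finset.sum_range_succ', add_comm]
    congr 1
    · refine Finset.sum_congr rfl fun i _ => ?_
      rw [List.take_succ_cons, List.take_succ_cons, mk_cons_eq x (l.take i),
        mk_cons_eq x (l.take (i + 1)), map_mul, map_mul, mul_assoc, mul_assoc]
    · simp [← FreeGroup.one_eq_mk]

theorem pathSum_step (hω : ∀ x y, ω x y = -ω y x) (h : G) {l m : List (Y × Bool)}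
    (hs : FreeGroup.Red.Step l m) : pathSum π ω h l = pathSum π ω h m := by
  cases hs with
  | @not l₁ l₂ x b =>
    rw [pathSum_append, pathSum_append]
    congr 1
    have e : π (FreeGroup.mk [(x, b)]) * π (FreeGroup.mk [(x, !b)]) = 1 := by
      rw [← map_mul, FreeGroup.mul_mk]
      have : FreeGroup.mk ([(x, b)] ++ [(x, !b)]) = (1 : FreeGroup Y) := by
        rw [FreeGroup.one_eq_mk]
        exact Quot.sound (FreeGroup.Red.Step.not (L₁ := []) (L₂ := []))
      rw [this, map_one]
    rw [pathSum, pathSum, mul_assoc _ (π (FreeGroup.mk [(x, b)])), e, mul_one, hω,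
      ← add_assoc, neg_add_cancel, zero_add]

theorem pathSum_congr (hω : ∀ x y, ω x y = -ω y x) (h : G) {l m : List (Y × Bool)}
    (hs : FreeGroup.mk l = FreeGroup.mk m) : pathSum π ω h l = pathSum π ω h m := by
  obtain ⟨n, h1, h2⟩ := FreeGroup.Red.exact.1 hs
  have key : ∀ {a b : List (Y × Bool)}, FreeGroup.Red a b →
      pathSum π ω h a = pathSum π ω h b := by
    intro a b hab
    induction hab with
    | refl => rfl
    | tail _ hs ih => rw [ih, pathSum_step π ω hω h hs]
  rw [key h1, key h2]

/-- The sum of an antisymmetric form along an element of the free group, computed on the reduced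
word; by `pathSum_congr` any representing word gives the same value. -/
def freeSum [DecidableEq Y] (h : G) (x : FreeGroup Y) : ℤ := pathSum π ω h x.toWord

variable [DecidableEq Y]

theorem freeSum_mk (hω : ∀ x y, ω x y = -ω y x) (h : G) (l : List (Y × Bool)) :
    freeSum π ω h (FreeGroup.mk l) = pathSum π ω h l :=
  pathSum_congr π ω hω h FreeGroup.mk_toWord

theorem freeSum_mul (hω : ∀ x y, ω x y = -ω y x) (h : G) (x y : FreeGroup Y) :
    freeSum π ω h (x * y) = freeSum π ω h x + freeSum π ω (h * π x) y := by
  conv_lhs => rw [← x.mk_toWord, ← y.mk_toWord, FreeGroup.mul_mk, freeSum_mk π ω hω,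
    pathSum_append, x.mk_toWord]
  rfl

theorem freeSum_one (h : G) : freeSum π ω h 1 = 0 := by
  simp [freeSum, pathSum]

theorem freeSum_inv (hω : ∀ x y, ω x y = -ω y x) (h : G) (x : FreeGroup Y) :
    freeSum π ω (h * π x) x⁻¹ = -freeSum π ω h x := by
  have := freeSum_mul π ω hω h x x⁻¹
  rw [mul_inv_cancel, freeSum_one] at this
  omega

/-- Stokes-type estimate: a bound `M` on the sums over relator loops gives the bound `M * N` on
the sum over a loop of area `N`. -/
theorem abs_pathSum_le_of_areaLE (hω : ∀ x y, ω x y = -ω y x) (S : Set (List (Y × Bool)))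
    (hπ : ∀ u ∈ S, π (FreeGroup.mk u) = 1) (M : ℤ) (hM : ∀ u ∈ S, ∀ h, |pathSum π ω h u| ≤ M)
    (h : G) (w : List (Y × Bool)) (N : ℕ)
    (hA : AreaLE (FreeGroup.mk '' S) (FreeGroup.mk w) N) : |pathSum π ω h w| ≤ M * N := by
  obtain ⟨c, ρ, hρ, hw⟩ := hA
  have rel : ∀ x : FreeGroup Y, (x ∈ FreeGroup.mk '' S ∨ x⁻¹ ∈ FreeGroup.mk '' S) →
      π x = 1 ∧ ∀ h, |freeSum π ω h x| ≤ M := by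
    rintro x (⟨u, hu, rfl⟩ | ⟨u, hu, e⟩)
    · exact ⟨hπ u hu, fun h => by rw [freeSum_mk π ω hω]; exact hM u hu h⟩
    · obtain rfl : x = (FreeGroup.mk u)⁻¹ := by rw [e, inv_inv]
      refine ⟨by rw [map_inv, hπ u hu, inv_one], fun h => ?_⟩
      have := freeSum_inv π ω hω h (FreeGroup.mk u)
      rw [hπ u hu, mul_one] at this
      rw [this, abs_neg, freeSum_mk π ω hω]
      exact hM u hu h
  have conj : ∀ i h, |freeSum π ω h (c i * ρ i * (c i)⁻¹)| ≤ M := by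
    intro i h
    obtain ⟨h1, h2⟩ := rel (ρ i) (hρ i)
    rw [freeSum_mul π ω hω, freeSum_mul π ω hω, map_mul, h1, mul_one, freeSum_inv π ω hω]
    have := h2 (h * π (c i))
    rwa [add_right_comm, add_neg_cancel, zero_add]
  have prod : ∀ (L : List (FreeGroup Y)), (∀ x ∈ L, ∀ h, |freeSum π ω h x| ≤ M) →
      ∀ h, |freeSum π ω h L.prod| ≤ M * L.length := by
    intro L
    induction L with
    | nil => intro _ h; simp [freeSum_one]
    | cons x L ih =>
      intro hL h
      rw [List.prod_cons, freeSum_mul π ω hω]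
      have h1 := hL x (by simp) h
      have h2 := ih (fun y hy => hL y (by simp [hy])) (h * π x)
      have h3 := abs_add_le (freeSum π ω h x) (freeSum π ω (h * π x) L.prod)
      push_cast [List.length_cons]
      linarith
  rw [← freeSum_mk π ω hω, hw]
  have := prod (List.ofFn fun i => c i * ρ i * (c i)⁻¹) (by
    intro x hx h
    obtain ⟨i, rfl⟩ := (List.mem_ofFn' _ _).1 hx
    exact conj i h) h
  simpa using this

end PathSum

/-! ### The word metric -/

section WordDist

variable {Y G : Type*} [Group G]

/-- The word distance from `a` to `b`; for surjective `π` the set is nonempty, so that the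
infimum is attained. -/
noncomputable def wordDist (π : FreeGroup Y →* G) (a b : G) : ℕ :=
  sInf {n | ∃ l : List (Y × Bool), l.length = n ∧ π (FreeGroup.mk l) = a⁻¹ * b}

variable {π : FreeGroup Y →* G}

theorem wordDist_le (a b : G) (l : List (Y × Bool)) (h : a * π (FreeGroup.mk l) = b) :
    wordDist π a b ≤ l.length :=
  Nat.sInf_le ⟨l, rfl, by rw [← h, inv_mul_cancel_left]⟩

theorem exists_wordDist (hπ : Function.Surjective π) (a b : G) :
    ∃ l : List (Y × Bool), l.length = wordDist π a b ∧ a * π (FreeGroup.mk l) = b := by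
  have : {n | ∃ l : List (Y × Bool), l.length = n ∧ π (FreeGroup.mk l) = a⁻¹ * b}.Nonempty := by
    obtain ⟨x, hx⟩ := hπ (a⁻¹ * b)
    obtain ⟨l, rfl⟩ := Quot.exists_rep x
    exact ⟨_, l, rfl, hx⟩
  obtain ⟨l, h1, h2⟩ := Nat.sInf_mem this
  exact ⟨l, h1, by rw [h2, mul_inv_cancel_left]⟩

theorem wordDist_self (a : G) : wordDist π a a = 0 :=
  Nat.le_zero.1 (wordDist_le a a [] (by rw [← FreeGroup.one_eq_mk, map_one, mul_one]))

theorem wordDist_comm (hπ : Function.Surjective π) (a b : G) :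
    wordDist π a b = wordDist π b a := by
  have key : ∀ a b, wordDist π b a ≤ wordDist π a b := by
    intro a b
    obtain ⟨l, h1, h2⟩ := exists_wordDist hπ a b
    rw [← h1, ← FreeGroup.invRev_length]
    refine wordDist_le _ _ _ ?_
    rw [← FreeGroup.inv_mk, map_inv, ← h2, mul_inv_cancel_right]
  exact le_antisymm (key b a) (key a b)

theorem wordDist_triangle (hπ : Function.Surjective π) (a b c : G) :
    wordDist π a c ≤ wordDist π a b + wordDist π b c := by
  obtain ⟨l, h1, h2⟩ := exists_wordDist hπ a b
  obtain ⟨m, h3, h4⟩ := exists_wordDist hπ b c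
  rw [← h1, ← h3, ← List.length_append]
  refine wordDist_le _ _ _ ?_
  rw [← FreeGroup.mul_mk, map_mul, ← mul_assoc, h2, h4]

theorem wordDist_take_succ (h : G) (l : List (Y × Bool)) (i : ℕ) :
    wordDist π (h * π (FreeGroup.mk (l.take i))) (h * π (FreeGroup.mk (l.take (i + 1)))) ≤ 1 := by
  refine (wordDist_le _ _ ((l.drop i).take 1) ?_).trans (List.length_take_le _ _)
  rw [mul_assoc, ← map_mul, FreeGroup.mul_mk, ← List.take_add]

end WordDist

/-! ### The calibrating form -/

/-- If vertices of the path `u 0, …, u (L-1)` at distance at most `3T + 1` are as far apart as their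
indices, then there is a form `ω = f dg` that is `T` on each edge of the path, at most `3T` on
every edge, and at most `3l(l-1)` on closed loops of length `l`. To make `ω` vanish wherever `g` is
uncontrolled, the weight of an edge is the minimum of `f` over its endpoints. -/
theorem exists_calibration {G : Type*} (d : G → G → ℕ) (d0 : ∀ x, d x x = 0)
    (dc : ∀ x y, d x y = d y x) (dt : ∀ x y z, d x z ≤ d x y + d y z)
    (L T : ℕ) (hT : 0 < T) (u : ℕ → G)
    (hu : ∀ a b, a ≤ b → b < L → d (u a) (u b) ≤ 3 * T + 1 → d (u a) (u b) = b - a) :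
    ∃ ω : G → G → ℤ, (∀ x y, ω x y = -ω y x) ∧
      (∀ a, a + 1 < L → ω (u a) (u (a + 1)) = T) ∧
      (∀ x y, d x y ≤ 1 → |ω x y| ≤ 3 * T) ∧
      (∀ (l : ℕ) (p : ℕ → G), (∀ i < l, d (p i) (p (i + 1)) ≤ 1) → p l = p 0 →
        |∑ i ∈ Finset.range l, ω (p i) (p (i + 1))| ≤ 3 * (l * (l - 1))) := by
  classical
  set f : G → ℕ := fun x => (Finset.range L).sup fun a => T - d x (u a) with hf
  have f_lip : ∀ x y, d x y ≤ 1 → f x ≤ f y + 1 := by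
    intro x y hxy
    refine Finset.sup_le fun a ha => ?_
    have h1 : T - d y (u a) ≤ f y := Finset.le_sup (f := fun a => T - d y (u a)) ha
    have h2 := dt y x (u a)
    have h3 := dc x y
    omega
  have f_le : ∀ x, f x ≤ T := fun x => Finset.sup_le fun a _ => Nat.sub_le _ _
  have f_pos : ∀ x, 0 < f x → ∃ a < L, d x (u a) < T := by
    intro x hx
    obtain ⟨a, ha, h⟩ := (Finset.lt_sup_iff (a := 0)).1 hx
    exact ⟨a, Finset.mem_range.1 ha, by omega⟩
  have f_u : ∀ a < L, f (u a) = T := by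
    intro a ha
    have h1 : T - d (u a) (u a) ≤ f (u a) :=
      Finset.le_sup (f := fun b => T - d (u a) (u b)) (Finset.mem_range.2 ha)
    have h2 := f_le (u a)
    rw [d0] at h1
    omega
  -- The coordinate `g x` is the minimum of `a + 3 * d x (u a)` over those `a` for which `u a` is
  -- within `2 * T + 1` of `x`.
  have g_ex : ∀ x, ∃ z : ℤ, 0 < f x → (∃ a < L, d x (u a) ≤ 2 * T + 1 ∧ z = a + 3 * d x (u a)) ∧
      ∀ a < L, d x (u a) ≤ 2 * T + 1 → z ≤ a + 3 * d x (u a) := by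
    intro x
    by_cases hx : 0 < f x
    · obtain ⟨a, ha, h⟩ := f_pos x hx
      obtain ⟨b, hb, hmin⟩ := Finset.exists_min_image
        ((Finset.range L).filter fun a => d x (u a) ≤ 2 * T + 1)
        (fun a => (a : ℤ) + 3 * d x (u a)) ⟨a, by simp [ha]; omega⟩
      simp only [Finset.mem_filter, Finset.mem_range] at hb hmin
      exact ⟨_, fun _ => ⟨⟨b, hb.1, hb.2, rfl⟩, fun c hc h => hmin c ⟨hc, h⟩⟩⟩
    · exact ⟨0, fun h => absurd h hx⟩
  choose g hg using g_ex
  have hu' : ∀ a b, a < L → b < L → d (u a) (u b) ≤ 3 * T + 1 →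
      (a ≤ b + d (u a) (u b) ∧ b ≤ a + d (u a) (u b)) := by
    intro a b ha hb h
    rcases le_total a b with hab | hab
    · have := hu a b hab hb h
      omega
    · rw [dc] at h ⊢
      have := hu b a hab ha h
      omega
  have g_u : ∀ a < L, g (u a) = a := by
    intro a ha
    obtain ⟨⟨b, hb, h1, h2⟩, h3⟩ := hg (u a) (by rw [f_u a ha]; exact hT)
    have h4 := h3 a ha (by rw [d0]; omega)
    have h5 := hu' a b ha hb (by omega)
    rw [d0] at h4
    omega
  have g_lip : ∀ x y, 0 < f x → 0 < f y → d x y ≤ 1 → g y ≤ g x + 3 := by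
    intro x y hx hy hxy
    obtain ⟨⟨b, hb, h1, h2⟩, h3⟩ := hg x hx
    obtain ⟨a, ha, h4⟩ := f_pos x hx
    have h5 := h3 a ha (by omega)
    have t1 := dt (u a) x (u b)
    have t2 := dc x (u a)
    have h6 := hu' a b ha hb (by omega)
    -- The minimizer for `x` is within `2 * T` of `x`, so it is a competitor for `y`.
    have h7 : d x (u b) ≤ 2 * T := by omega
    have t3 := dt y x (u b)
    have t4 := dc x y
    have h8 := (hg y hy).2 b hb (by omega)
    omega
  have g_abs : ∀ x y, 0 < f x → 0 < f y → d x y ≤ 1 → |g y - g x| ≤ 3 := by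
    intro x y hx hy hxy
    have h1 := g_lip x y hx hy hxy
    have h2 := g_lip y x hy hx (by rw [dc]; exact hxy)
    rw [abs_le]
    constructor <;> linarith
  refine ⟨fun x y => (min (f x) (f y) : ℕ) * (g y - g x), ?_, ?_, ?_, ?_⟩
  · intro x y
    simp only [min_comm (f x) (f y)]
    ring
  · intro a ha
    simp only
    rw [f_u a (by omega), f_u _ ha, g_u a (by omega), g_u _ ha, min_self]
    push_cast
    ring
  · intro x y hxy
    simp only
    rcases Nat.eq_zero_or_pos (min (f x) (f y)) with h | h
    · simp [h]
    · rw [abs_mul, Nat.abs_cast]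
      have h1 := g_abs x y (by omega) (by omega) hxy
      have h2 : ((min (f x) (f y) : ℕ) : ℤ) ≤ T := by
        have := f_le x
        omega
      nlinarith [abs_nonneg (g y - g x)]
  · intro l p hp hcl
    rcases Nat.eq_zero_or_pos l with rfl | hl
    · simp
    set F : ℕ → ℕ := fun i => min (f (p i)) (f (p (i + 1))) with hF
    have F_step : ∀ i, i + 1 < l → F (i + 1) ≤ F i + 1 ∧ F i ≤ F (i + 1) + 1 := by
      intro i hi
      have h1 := f_lip _ _ (hp i (by omega))
      have h2 := f_lip _ _ (hp (i + 1) hi)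
      have h3 := f_lip _ _ ((dc _ _).trans_le (hp i (by omega)))
      have h4 := f_lip _ _ ((dc _ _).trans_le (hp (i + 1) hi))
      simp only [hF]
      omega
    have F_far : ∀ n i, i + n < l → F (i + n) ≤ F i + n ∧ F i ≤ F (i + n) + n := by
      intro n
      induction n with
      | zero => intro i _; simp
      | succ n ih =>
        intro i hi
        have h1 := ih i (by omega)
        have h2 := F_step (i + n) (by omega)
        rw [← add_assoc]
        omega
    have F_var : ∀ i m, i < l → m < l → |(F i : ℤ) - F m| ≤ l - 1 := by
      intro i m hi hm
      rw [abs_le]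
      rcases le_total i m with h | h
      · obtain ⟨n, rfl⟩ := Nat.exists_eq_add_of_le h
        have := F_far n i hm
        omega
      · obtain ⟨n, rfl⟩ := Nat.exists_eq_add_of_le h
        have := F_far n m hi
        omega
    -- The constant `F m` may be subtracted from the weights: it is `0` if `f` vanishes somewhere
    -- on the loop, and otherwise the sum of `dg` over the closed loop is `0`.
    obtain ⟨m, hm, hF0, hsum⟩ : ∃ m < l, (∀ i < l, F i = 0 → F m = 0) ∧
        ∑ i ∈ Finset.range l, (F i : ℤ) * (g (p (i + 1)) - g (p i)) =
        ∑ i ∈ Finset.range l, ((F i : ℤ) - F m) * (g (p (i + 1)) - g (p i)) := by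
      by_cases h : ∃ m < l, F m = 0
      · obtain ⟨m, hm, h0⟩ := h
        exact ⟨m, hm, fun _ _ _ => h0, by simp [h0]⟩
      · refine ⟨0, hl, fun i hi h0 => absurd ⟨i, hi, h0⟩ h, ?_⟩
        simp only [sub_mul]
        rw [Finset.sum_sub_distrib, ← Finset.mul_sum, Finset.sum_range_sub (fun i => g (p i)), hcl]
        ring
    have bound : ∀ i ∈ Finset.range l,
        |((F i : ℤ) - F m) * (g (p (i + 1)) - g (p i))| ≤ 3 * ((l : ℤ) - 1) := by
      intro i hi
      rw [Finset.mem_range] at hi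
      rcases Nat.eq_zero_or_pos (F i) with h | h
      · rw [h, hF0 i hi h]
        simp
        omega
      · rw [abs_mul]
        have h1 := F_var i m hi hm
        have h2 : 0 < f (p i) ∧ 0 < f (p (i + 1)) := by simp only [hF] at h; omega
        have h3 := g_abs _ _ h2.1 h2.2 (hp i hi)
        nlinarith [abs_nonneg ((F i : ℤ) - F m), abs_nonneg (g (p (i + 1)) - g (p i))]
    change |∑ i ∈ Finset.range l, (F i : ℤ) * (g (p (i + 1)) - g (p i))| ≤ _
    rw [hsum]
    refine (Finset.abs_sum_le_sum_abs _ _).trans ((Finset.sum_le_sum bound).trans_eq ?_)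
    rw [Finset.sum_const, Finset.card_range, nsmul_eq_mul]
    ring

/-! ### The short non-geodesic subword -/

/-- Let `⟨Y ∣ S⟩` be a finite presentation of a group `G` (`S` a
finite set of nonempty cyclically reduced words) in which every relator has length at
most `r ≥ 2`, and suppose that the Dehn function satisfies `D(n) ≤ λ·n` for all `n`
(i.e. every word representing `1` in `G` has area at most `λ` times its length).
Then every (nonempty) word `w` over `Y ∪ Y⁻¹` with `w =_G 1` has a subword of length
at most `384·λ·r·(r−1) + 64` that is not geodesic. -/
theorem exists_short_nongeodesic_subword {Y : Type*} [Finite Y]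
    (S : Set (List (Y × Bool))) (hSfin : S.Finite)
    (hSne : ∀ u ∈ S, u ≠ []) (hScr : ∀ u ∈ S, IsCyclicallyReducedWord u)
    (r : ℕ) (hr : 2 ≤ r) (hSlen : ∀ u ∈ S, u.length ≤ r)
    (lam : ℝ)
    (hDehn : ∀ w : List (Y × Bool),
      FreeGroup.mk w ∈ Subgroup.normalClosure (FreeGroup.mk '' S) →
      ∃ N : ℕ, (N : ℝ) ≤ lam * w.length ∧ AreaLE (FreeGroup.mk '' S) (FreeGroup.mk w) N)
    (w : List (Y × Bool)) (hw : w ≠ [])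
    (hwtriv : FreeGroup.mk w ∈ Subgroup.normalClosure (FreeGroup.mk '' S)) :
    ∃ s : List (Y × Bool), s <:+: w ∧
      (s.length : ℝ) ≤ 384 * lam * r * (r - 1) + 64 ∧
      ¬ IsGeodesicWord (FreeGroup.mk '' S) s := by
  classical
  by_contra hcon
  push Not at hcon
  set P := Subgroup.normalClosure (FreeGroup.mk '' S) with hP
  set π := QuotientGroup.mk' P with hπ
  have hsurj : Function.Surjective π := QuotientGroup.mk'_surjective P
  have ker : ∀ x, π x = 1 ↔ x ∈ P := fun x => QuotientGroup.eq_one_iff x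
  set v : ℕ → FreeGroup Y ⧸ P := fun i => π (FreeGroup.mk (w.take i)) with hv
  have hvs : ∀ i k, v i * π (FreeGroup.mk ((w.drop i).take k)) = v (i + k) := by
    intro i k
    simp only [hv]
    rw [← map_mul, FreeGroup.mul_mk, ← List.take_add]
  -- For a letter `y` of `w`, the area of `y y⁻¹` is nonnegative and at most `2 * lam`.
  have hlam : 0 ≤ lam := by
    obtain ⟨⟨y, b⟩, hy⟩ := List.exists_mem_of_ne_nil w hw
    obtain ⟨N, hN, -⟩ := hDehn [(y, true), (y, false)] (by
      have : FreeGroup.mk [(y, true), (y, false)] = (1 : FreeGroup Y) := by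
        rw [FreeGroup.one_eq_mk]
        exact Quot.sound (FreeGroup.Red.Step.not (L₁ := []) (L₂ := []))
      rw [this]
      exact one_mem _)
    have : (0 : ℝ) ≤ N := N.cast_nonneg
    simp at hN
    linarith
  have hr' : (2 : ℝ) ≤ r := by exact_mod_cast hr
  set q : ℝ := lam * r * (r - 1) with hq
  have hq0 : 0 ≤ q := mul_nonneg (mul_nonneg hlam (by linarith)) (by linarith)
  have hK : 384 * lam * r * (r - 1) + 64 = 384 * q + 64 := by rw [hq]; ring
  rw [hK] at hcon
  obtain ⟨T, hT1, hT2⟩ : ∃ T : ℕ, 6 * q + 1 ≤ T ∧ (T : ℝ) < 6 * q + 2 := by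
    refine ⟨⌈6 * q⌉₊ + 1, ?_, ?_⟩
    · push_cast
      linarith [Nat.le_ceil (6 * q)]
    · push_cast
      linarith [Nat.ceil_lt_add_one (a := 6 * q) (by linarith)]
  obtain ⟨K, hK1, hK2⟩ : ∃ K : ℕ, (K : ℝ) ≤ 384 * q + 64 ∧ 384 * q + 63 < K :=
    ⟨⌊384 * q + 64⌋₊, Nat.floor_le (by linarith), by
      linarith [Nat.lt_floor_add_one (384 * q + 64)]⟩
  have hKT : 21 * T + 15 ≤ K := by
    have : (21 * T + 15 : ℝ) ≤ K := by linarith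
    exact_mod_cast this
  have hT0 : 0 < T := by
    have : (0 : ℝ) < T := by linarith
    exact_mod_cast this
  have geo : ∀ i k, i + k ≤ w.length → k ≤ K → wordDist π (v i) (v (i + k)) = k := by
    intro i k hik hk
    have hlen : ((w.drop i).take k).length = k := by
      rw [List.length_take, List.length_drop]
      omega
    apply le_antisymm
    · exact (wordDist_le _ _ _ (hvs i k)).trans hlen.le
    · obtain ⟨l, h1, h2⟩ := exists_wordDist hsurj (v i) (v (i + k))
      have hk' : (k : ℝ) ≤ K := by exact_mod_cast hk
      have h3 := hcon ((w.drop i).take k)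
        ((List.take_prefix _ _).isInfix.trans (List.drop_suffix _ _).isInfix)
        (by rw [hlen]; linarith) l (by
          rw [← hP, ← ker, map_mul, map_inv, inv_mul_eq_one]
          exact mul_left_cancel (h2.trans (hvs i k).symm))
      omega
  have v0 : v 0 = 1 := by simp [hv, ← FreeGroup.one_eq_mk]
  have vn : v w.length = 1 := by
    simp only [hv, List.take_length]
    exact (ker _).2 hwtriv
  have hwK : K < w.length := by
    by_contra hle
    have h := geo 0 w.length (by omega) (by omega)
    rw [zero_add, v0, vn, wordDist_self] at h
    exact hw (List.length_eq_zero_iff.1 h.symm)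
  have hex : ∃ L, ∃ i, i + L ≤ w.length ∧ K < L ∧ wordDist π (v i) (v (i + L)) ≤ 3 * T + 1 :=
    ⟨w.length, 0, by omega, hwK, by rw [zero_add, v0, vn, wordDist_self]; omega⟩
  obtain ⟨L, ⟨i, hiL, hKL, hclose⟩, hmin⟩ : ∃ L, (∃ i, i + L ≤ w.length ∧ K < L ∧
      wordDist π (v i) (v (i + L)) ≤ 3 * T + 1) ∧ ∀ L' < L, ¬ ∃ i, i + L' ≤ w.length ∧ K < L' ∧
      wordDist π (v i) (v (i + L')) ≤ 3 * T + 1 :=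
    ⟨Nat.find hex, Nat.find_spec hex, fun _ h => Nat.find_min hex h⟩
  obtain ⟨ω, ω_anti, ω_path, ω_edge, ω_loop⟩ := exists_calibration (wordDist π) wordDist_self
    (wordDist_comm hsurj) (wordDist_triangle hsurj) L T hT0 (fun a => v (i + a)) (by
      intro a b hab hb h
      obtain ⟨k, rfl⟩ := Nat.exists_eq_add_of_le hab
      simp only [← add_assoc] at h ⊢
      rw [Nat.add_sub_cancel_left]
      by_cases hk : k ≤ K
      · exact geo _ _ (by omega) hk
      · exact absurd ⟨i + a, by omega, by omega, h⟩ (hmin k (by omega)))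
  have hrel : ∀ u ∈ S, ∀ h, |pathSum π ω h u| ≤ 3 * ((r : ℤ) * (r - 1)) := by
    intro u hu h
    have h1 := ω_loop u.length (fun j => h * π (FreeGroup.mk (u.take j)))
      (fun j _ => wordDist_take_succ h u j) (by
        simp only [List.take_length, List.take_zero, ← FreeGroup.one_eq_mk, map_one]
        rw [(ker _).2 (Subgroup.subset_normalClosure ⟨u, hu, rfl⟩)])
    rw [pathSum_eq_sum]
    refine h1.trans ?_
    have h2 : (u.length : ℤ) ≤ r := by exact_mod_cast hSlen u hu
    have h3 : (0 : ℤ) ≤ u.length := by positivity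
    have h4 : (2 : ℤ) ≤ r := by exact_mod_cast hr
    nlinarith
  obtain ⟨c, hc1, hc2⟩ := exists_wordDist hsurj (v (i + L)) (v i)
  rw [wordDist_comm hsurj] at hc1
  set s := (w.drop i).take L with hs
  have hslen : s.length = L := by
    rw [hs, List.length_take, List.length_drop]
    omega
  have hclosed : FreeGroup.mk (s ++ c) ∈ P := by
    rw [← ker, ← FreeGroup.mul_mk, map_mul]
    apply mul_left_cancel (a := v i)
    rw [← mul_assoc, hvs, hc2, mul_one]
  obtain ⟨N, hN, hA⟩ := hDehn (s ++ c) hclosed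
  have hup := abs_pathSum_le_of_areaLE π ω ω_anti S
    (fun u hu => (ker _).2 (Subgroup.subset_normalClosure ⟨u, hu, rfl⟩)) _ hrel (v i) (s ++ c) N hA
  have hchord : |pathSum π ω (v (i + L)) c| ≤ 3 * T * (3 * T + 1) := by
    rw [pathSum_eq_sum]
    refine (Finset.abs_sum_le_sum_abs _ _).trans ((Finset.sum_le_sum fun j _ =>
      ω_edge _ _ (wordDist_take_succ _ c j)).trans ?_)
    rw [Finset.sum_const, Finset.card_range, nsmul_eq_mul, mul_comm]
    have : (c.length : ℤ) ≤ 3 * T + 1 := by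
      rw [hc1]
      exact_mod_cast hclose
    exact mul_le_mul_of_nonneg_left this (by positivity)
  have hmain : (T : ℤ) * (L - 1) - 3 * T ≤ pathSum π ω (v i) s := by
    have hpt : ∀ a ≤ L, v i * π (FreeGroup.mk (s.take a)) = v (i + a) := by
      intro a ha
      rw [hs, List.take_take, min_eq_left ha, hvs]
    obtain ⟨m, rfl⟩ : ∃ m, L = m + 1 := ⟨L - 1, by omega⟩
    rw [pathSum_eq_sum, hslen, Finset.sum_range_succ]
    have h1 : ∑ a ∈ Finset.range m, ω (v i * π (FreeGroup.mk (s.take a)))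
        (v i * π (FreeGroup.mk (s.take (a + 1)))) = T * m := by
      rw [Finset.sum_congr rfl (g := fun _ => (T : ℤ))]
      · rw [Finset.sum_const, Finset.card_range, nsmul_eq_mul, mul_comm]
      · intro a ha
        rw [Finset.mem_range] at ha
        rw [hpt a (by omega), hpt (a + 1) (by omega)]
        exact ω_path a (by omega)
    have h2 := abs_le.1 (ω_edge _ _ (wordDist_take_succ (v i) s m))
    rw [h1]
    push_cast
    linarith [h2.1]
  rw [pathSum_append, hvs] at hup
  have hineq : (T : ℤ) * (L - 1) - 3 * T - 3 * T * (3 * T + 1) ≤ 3 * ((r : ℤ) * (r - 1)) * N := by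
    have h1 := (abs_le.1 hup).2
    have h2 := (abs_le.1 hchord).1
    linarith
  have hreal : (T : ℝ) * (L - 1) - 3 * T - 3 * T * (3 * T + 1) ≤ 3 * ((r : ℝ) * (r - 1)) * N := by
    exact_mod_cast hineq
  have hlen : ((s ++ c).length : ℝ) ≤ L + 3 * T + 1 := by
    have : (s ++ c).length ≤ L + 3 * T + 1 := by
      rw [List.length_append, hslen, hc1]
      omega
    exact_mod_cast this
  have hN' : (N : ℝ) ≤ lam * (L + 3 * T + 1) := hN.trans (mul_le_mul_of_nonneg_left hlen hlam)
  have hrr : (0 : ℝ) ≤ 3 * ((r : ℝ) * (r - 1)) := by nlinarith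
  have h1 : 3 * ((r : ℝ) * (r - 1)) * N ≤ 3 * q * (L + 3 * T + 1) := by
    refine (mul_le_mul_of_nonneg_left hN' hrr).trans_eq ?_
    rw [hq]
    ring
  have h2 : 3 * q * ((L : ℝ) + 3 * T + 1) ≤ T / 2 * (L + 3 * T + 1) :=
    mul_le_mul_of_nonneg_right (by linarith) (by positivity)
  have hT0' : (0 : ℝ) < T := by exact_mod_cast hT0
  have h3 : (T : ℝ) * (L - 1 - 3 - 3 * (3 * T + 1)) ≤ T * ((L + 3 * T + 1) / 2) := by linarith
  have h4 := le_of_mul_le_mul_left h3 hT0'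
  have h5 : (L : ℝ) ≤ 21 * T + 15 := by linarith
  have h6 : L ≤ 21 * T + 15 := by exact_mod_cast h5
  omega
end

section
/- Let P be a pregroup and let g, a ∈ X with g ≠ a^σ. Suppose there exist k ≥ 1 and elements a_1, …, a_{k+1} ∈ X with a_1 = a, a_{k+1} = g^σ, and (a_{i+1}^σ, a_i) ∈ D(P) for all 1 ≤ i ≤ k. Then g intermults with a: either (g, a) ∈ D(P), or there exists x ∈ X with (g, x) ∈ D(P) and (x^σ, a) ∈ D(P). -/
namespace Pregroup

variable {P : Type*} (pg : Pregroup P)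

theorem D_mul_right_inv {x y : P} (h : pg.D x y) : pg.D (pg.mul x y) (pg.inv y) := by
  rw [pg.D_assoc _ _ _ h (pg.D_mul_inv y), pg.mul_inv]
  exact pg.D_one_right x

theorem D_mul_left {x y : P} (h : pg.D (pg.inv x) y) : pg.D x (pg.mul (pg.inv x) y) := by
  rw [← pg.D_assoc _ _ _ (pg.D_mul_inv x) h, pg.mul_inv]
  exact pg.D_one_left y

theorem mul_mul_inv_cancel {x y : P} (h : pg.D x y) :
    pg.mul (pg.mul x y) (pg.inv y) = x := by
  rw [pg.mul_assoc _ _ _ h (pg.D_mul_inv y) (pg.D_mul_right_inv h), pg.mul_inv, pg.mul_one]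

theorem mul_inv_mul_cancel {x y : P} (h : pg.D (pg.inv x) y) :
    pg.mul x (pg.mul (pg.inv x) y) = y := by
  have hD : pg.D (pg.mul x (pg.inv x)) y := by
    rw [pg.mul_inv]
    exact pg.D_one_left y
  rw [← pg.mul_assoc _ _ _ (pg.D_mul_inv x) h hD, pg.mul_inv, pg.one_mul]

/-- Adjacent elements `x`, `y` have nested neighbourhoods: one of them is adjacent to both
a given neighbour `p` of `x` and a given neighbour `q` of `y`. -/
theorem shorten {p x y q : P} (hpx : pg.D (pg.inv p) x) (hxy : pg.D (pg.inv x) y)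
    (hyq : pg.D (pg.inv y) q) : pg.D (pg.inv p) y ∨ pg.D (pg.inv x) q := by
  rcases pg.five (pg.mul (pg.inv p) x) (pg.inv x) y (pg.mul (pg.inv y) q)
    (pg.D_mul_right_inv hpx) hxy (pg.D_mul_left hyq) with h | h
  · left
    rwa [pg.mul_mul_inv_cancel hpx] at h
  · right
    rwa [pg.D_assoc _ _ _ hxy (pg.D_mul_left hyq), pg.mul_inv_mul_cancel hyq] at h

end Pregroup

/-- Let `P` be a pregroup and `g, a ∈ X = P ∖ {1}` with `g ≠ a^σ`.
Suppose there exist `k ≥ 1` and elements `a₁, …, a_{k+1} ∈ X` with `a₁ = a`,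
`a_{k+1} = g^σ`, and `(a_{i+1}^σ, a_i) ∈ D(P)` for all `1 ≤ i ≤ k`.  Then `g`
intermults with `a`: either `(g, a) ∈ D(P)`, or there exists `x ∈ X` with
`(g, x) ∈ D(P)` and `(x^σ, a) ∈ D(P)`. -/
theorem Pregroup.intermult_of_chain {P : Type*} (pg : Pregroup P) (g a : P)
    (hg : g ≠ pg.one) (ha : a ≠ pg.one) (hga : g ≠ pg.inv a)
    (k : ℕ) (hk : 1 ≤ k) (c : ℕ → P)
    (hcX : ∀ i, 1 ≤ i → i ≤ k + 1 → c i ≠ pg.one)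
    (hfirst : c 1 = a) (hlast : c (k + 1) = pg.inv g)
    (hD : ∀ i, 1 ≤ i → i ≤ k → pg.D (pg.inv (c (i + 1))) (c i)) :
    pg.D g a ∨ ∃ x : P, x ≠ pg.one ∧ pg.D g x ∧ pg.D (pg.inv x) a := by
  have key : ∀ n, 1 ≤ n → n ≤ k → pg.D (pg.inv (c (n + 1))) (c 1) ∨
      ∃ x, x ≠ pg.one ∧ pg.D (pg.inv (c (n + 1))) x ∧ pg.D (pg.inv x) (c 1) := by
    intro n hn
    induction n, hn using Nat.le_induction with
    | base => exact fun h => Or.inl (hD 1 le_rfl h)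
    | succ n hn ih =>
      intro hnk
      have hstep := hD (n + 1) (by omega) hnk
      have hne := hcX (n + 1) (by omega) (by omega)
      rcases ih (by omega) with h | ⟨x, hx, h1, h2⟩
      · exact Or.inr ⟨_, hne, hstep, h⟩
      · rcases pg.shorten hstep h1 h2 with h | h
        · exact Or.inr ⟨x, hx, h, h2⟩
        · exact Or.inr ⟨_, hne, hstep, h⟩
  simpa only [hlast, hfirst, pg.inv_inv] using key k hk le_rfl
end

section
/- Let X be a set equipped with an involution σ, and let F(X^σ) = ⟨X | xx^σ (x ∈ X)⟩. Let v ∈ X* be a nonempty σ-reduced word such that v is equal in F(X^σ) to its own inverse. Then v is conjugate in F(X^σ) to a single letter x ∈ X with x^σ = x. -/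
/-!
`F(X^σ)` has a normal form: it acts on the set of `σ`-reduced words, a letter `x` acting by
prepending `x` and cancelling a resulting initial pair `x x^σ` (`letterPerm`, `wordAction`).
The group element of a reduced word `w` sends the empty word to `w`, so reduced words that are equal in the group are
equal as words (`eq_of_wordToFXsigma_eq`).

The inverse of `v = x₁⋯xₙ` is represented by `xₙ^σ⋯x₁^σ`, which is again reduced. Hence a
self-inverse reduced `v` equals `xₙ^σ⋯x₁^σ` letter by letter. Either `v` is a single letter fixed
by `σ`, or `v = a t a^σ` with `t` reduced and satisfying the same symmetry; `t` is nonempty, since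
`a a^σ` is not reduced, and `v` is conjugate to `t` by `a`, so one inducts on the length.
-/

/-- The relators `x·x^σ` (`x ∈ X`) defining `F(X^σ)`. -/
def sigmaRels {X : Type*} (σ : X → X) : Set (FreeGroup X) :=
  {r | ∃ x : X, r = FreeGroup.of x * FreeGroup.of (σ x)}

/-- The group `F(X^σ) = ⟨X ∣ x x^σ (x ∈ X)⟩`. -/
abbrev FXsigma {X : Type*} (σ : X → X) : Type _ :=
  PresentedGroup (sigmaRels σ)

/-- The image in `F(X^σ)` of a word over `X`. -/
def wordToFXsigma {X : Type*} (σ : X → X) (w : List X) : FXsigma σ :=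
  (w.map fun x => (PresentedGroup.of x : FXsigma σ)).prod

/-- A word over `X` is `σ`-reduced if it contains no consecutive pair `x x^σ`. -/
def SigmaReduced {X : Type*} (σ : X → X) (w : List X) : Prop :=
  w.Chain' fun a b => b ≠ σ a

theorem sigmaReduced_tail {X : Type*} {σ : X → X} {a : X} {w : List X}
    (h : SigmaReduced σ (a :: w)) : SigmaReduced σ w :=
  List.IsChain.tail h

open Classical in
/-- Left multiplication of a word by a letter, followed by cancellation of an initial `x x^σ`. -/
noncomputable def letterAct {X : Type*} (σ : X → X) (x : X) : List X → List X
  | [] => [x]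
  | y :: t => if y = σ x then t else x :: y :: t

theorem letterAct_reduced {X : Type*} {σ : X → X} (x : X) {w : List X}
    (h : SigmaReduced σ w) : SigmaReduced σ (letterAct σ x w) := by
  cases w with
  | nil => exact List.IsChain.singleton x
  | cons y t =>
    simp only [letterAct]
    split_ifs with hy
    · exact sigmaReduced_tail h
    · exact List.IsChain.cons_cons hy h

/-- Acting by `x` and then by `x^σ` restores a reduced word. If `x` cancelled the first letter, the
second letter is not `x`, so prepending `x^σ` causes no further cancellation. -/
theorem letterAct_letterAct {X : Type*} {σ : X → X} (hσ : ∀ x, σ (σ x) = x) (x : X)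
    {w : List X} (h : SigmaReduced σ w) : letterAct σ (σ x) (letterAct σ x w) = w := by
  cases w with
  | nil => simp [letterAct, hσ]
  | cons y t =>
    by_cases hy : y = σ x
    · subst hy
      cases t with
      | nil => simp [letterAct]
      | cons z s =>
        have hz : z ≠ σ (σ x) := (List.isChain_cons_cons.mp h).1
        simp [letterAct, hz]
    · simp [letterAct, hy, hσ]

/-- A letter as a permutation of the set of reduced words. -/
noncomputable def letterPerm {X : Type*} (σ : X → X) (hσ : ∀ x, σ (σ x) = x) (x : X) :
    Equiv.Perm {w : List X // SigmaReduced σ w} where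
  toFun w := ⟨letterAct σ x w.1, letterAct_reduced x w.2⟩
  invFun w := ⟨letterAct σ (σ x) w.1, letterAct_reduced (σ x) w.2⟩
  left_inv w := Subtype.ext (letterAct_letterAct hσ x w.2)
  right_inv w := Subtype.ext (by
    have := letterAct_letterAct hσ (σ x) w.2
    rwa [hσ] at this)

/-- The action of `F(X^σ)` on the set of reduced words. -/
noncomputable def wordAction {X : Type*} (σ : X → X) (hσ : ∀ x, σ (σ x) = x) :
    FXsigma σ →* Equiv.Perm {w : List X // SigmaReduced σ w} :=
  PresentedGroup.toGroup (f := letterPerm σ hσ) (by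
    rintro _ ⟨x, rfl⟩
    rw [map_mul, FreeGroup.lift_apply_of, FreeGroup.lift_apply_of]
    exact Equiv.ext fun w => (letterPerm σ hσ x).right_inv w)

theorem wordToFXsigma_cons {X : Type*} (σ : X → X) (a : X) (w : List X) :
    wordToFXsigma σ (a :: w) = PresentedGroup.of a * wordToFXsigma σ w := by
  simp [wordToFXsigma]

theorem wordToFXsigma_append {X : Type*} (σ : X → X) (v w : List X) :
    wordToFXsigma σ (v ++ w) = wordToFXsigma σ v * wordToFXsigma σ w := by
  simp [wordToFXsigma]

theorem wordAction_nil {X : Type*} {σ : X → X} (hσ : ∀ x, σ (σ x) = x) (w : List X)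
    (h : SigmaReduced σ w) :
    (wordAction σ hσ (wordToFXsigma σ w) ⟨[], List.IsChain.nil⟩).1 = w := by
  induction w with
  | nil => simp [wordToFXsigma]
  | cons a t ih =>
    have ha : wordAction σ hσ (PresentedGroup.of a) = letterPerm σ hσ a :=
      PresentedGroup.toGroup.of _
    rw [wordToFXsigma_cons, map_mul, ha, Equiv.Perm.mul_apply]
    change letterAct σ a (wordAction σ hσ (wordToFXsigma σ t) ⟨[], List.IsChain.nil⟩).1 = _
    rw [ih (sigmaReduced_tail h)]
    cases t with
    | nil => rfl
    | cons b s =>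
      have hb : b ≠ σ a := (List.isChain_cons_cons.mp h).1
      simp [letterAct, hb]

theorem eq_of_wordToFXsigma_eq {X : Type*} {σ : X → X} (hσ : ∀ x, σ (σ x) = x)
    {v w : List X} (hv : SigmaReduced σ v) (hw : SigmaReduced σ w)
    (h : wordToFXsigma σ v = wordToFXsigma σ w) : v = w := by
  rw [← wordAction_nil hσ v hv, ← wordAction_nil hσ w hw, h]

theorem of_sigma {X : Type*} (σ : X → X) (x : X) :
    (PresentedGroup.of (σ x) : FXsigma σ) = (PresentedGroup.of x)⁻¹ := by
  rw [eq_inv_iff_mul_eq_one, mul_eq_one_iff_eq_inv, eq_comm, inv_eq_iff_mul_eq_one]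
  exact PresentedGroup.one_of_mem (rels := sigmaRels σ) ⟨x, rfl⟩

theorem wordToFXsigma_inv {X : Type*} (σ : X → X) (w : List X) :
    wordToFXsigma σ (w.map σ).reverse = (wordToFXsigma σ w)⁻¹ := by
  induction w with
  | nil => simp [wordToFXsigma]
  | cons a t ih =>
    rw [List.map_cons, List.reverse_cons, wordToFXsigma_append, ih,
      wordToFXsigma_cons σ a t, mul_inv_rev, ← of_sigma]
    simp [wordToFXsigma]

theorem sigmaReduced_inv {X : Type*} {σ : X → X} (hσ : ∀ x, σ (σ x) = x) {w : List X}
    (h : SigmaReduced σ w) : SigmaReduced σ (w.map σ).reverse := by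
  refine List.isChain_reverse.mpr ((List.isChain_map σ).mpr (List.IsChain.imp ?_ h))
  intro a b hab hba
  exact hab (by rw [hba, hσ])

/-- The purely combinatorial half: a nonempty reduced word that coincides with its formal inverse
is conjugate to a letter fixed by `σ`. -/
theorem conj_of_eq_inv {X : Type*} (σ : X → X) (v : List X) (hne : v ≠ [])
    (hred : SigmaReduced σ v) (hv : (v.map σ).reverse = v) :
    ∃ x : X, σ x = x ∧
      ∃ u : FXsigma σ,
        wordToFXsigma σ v = u * (PresentedGroup.of x : FXsigma σ) * u⁻¹ := by
  induction v using List.bidirectionalRec with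
  | nil => exact absurd rfl hne
  | singleton a => exact ⟨a, by simpa using hv, 1, by simp [wordToFXsigma]⟩
  | cons_append a t b ih =>
    have hv' : σ b = a ∧ (t.map σ).reverse ++ [σ a] = t ++ [b] := by simpa using hv
    obtain ⟨ht, hab⟩ := List.append_inj' hv'.2 rfl
    obtain rfl : σ a = b := by simpa using hab
    have ht0 : t ≠ [] := by
      rintro rfl
      exact (List.isChain_cons_cons.mp hred).1 rfl
    have htr : SigmaReduced σ t :=
      List.IsChain.left_of_append (sigmaReduced_tail hred)
    obtain ⟨x, hx, u, hu⟩ := ih ht0 htr ht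
    refine ⟨x, hx, PresentedGroup.of a * u, ?_⟩
    have hs : wordToFXsigma σ [σ a] = (PresentedGroup.of a)⁻¹ := by
      rw [← of_sigma]; simp [wordToFXsigma]
    rw [wordToFXsigma_cons, wordToFXsigma_append, hs, hu]
    group

/-- Let `X` be a set with an involution `σ`, and let
`F(X^σ) = ⟨X ∣ x x^σ (x ∈ X)⟩`.  Let `v` be a nonempty `σ`-reduced word over `X`
that is equal in `F(X^σ)` to its own inverse.  Then `v` is conjugate in `F(X^σ)` to
a single letter `x ∈ X` with `x^σ = x`. -/
theorem selfInverse_word_conjugate_to_involution {X : Type*} (σ : X → X)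
    (hσ : ∀ x, σ (σ x) = x) (v : List X) (hne : v ≠ [])
    (hred : SigmaReduced σ v)
    (hself : (wordToFXsigma σ v)⁻¹ = wordToFXsigma σ v) :
    ∃ x : X, σ x = x ∧
      ∃ u : FXsigma σ,
        wordToFXsigma σ v = u * (PresentedGroup.of x : FXsigma σ) * u⁻¹ :=
  conj_of_eq_inv σ v hne hred
    (eq_of_wordToFXsigma_eq hσ (sigmaReduced_inv hσ hred) hred
      ((wordToFXsigma_inv σ v).trans hself))
end
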